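/- arXiv:2602.08646 — 3 statements merged into one kernel-verified Lean document; each statement's English description precedes it below -/
import Mathlib

section
/- Let N be a positive even integer. Define the map 𝓕 : ℝ^N → ℂ^{N/2} by 𝓕(x) = y where, writing x̂ = F x for the unitary DFT, y_0 = x̂_0/√2 + (x̂_{N/2}/√2)·i and y_k = x̂_k for k = 1, …, N/2 − 1. Then 𝓕 is a bijection from ℝ^N to ℂ^{N/2}. -/
/-!
Both sides are real vector spaces of dimension `N`, and the compact spectral map is `ℝ`-linear, so
it suffices that its kernel is trivial (`eq_zero_of_compactMap_eq_zero`). Because `x` is real, its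
spectrum has the conjugate symmetry `x̂_{k'} = conj x̂_k` whenever `N ∣ k + k'`
(`dft_eq_conj`). Hence `x̂_0` and `x̂_{N/2}` are real and are the real and imaginary parts of
`√2 y_0`, while `x̂_k` for `N/2 < k < N` is determined by `x̂_{N-k}`. So `𝓕 x = 0` forces
`x̂ = 0`, and then `x = 0` because the DFT matrix is, up to a scalar, a Vandermonde matrix on the
distinct nodes `ζ ^ k`, with `ζ` a primitive `N`-th root of unity (`eq_zero_of_dft_eq_zero`).
-/

open Complex Finset

/-- The unitary discrete Fourier transform of a real vector `x ∈ ℝ^N`. -/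
noncomputable def dft (N : ℕ) (x : Fin N → ℝ) : Fin N → ℂ :=
  fun k => (1 / (Real.sqrt N : ℂ)) *
    ∑ j : Fin N, (x j : ℂ) *
      Complex.exp (-2 * Real.pi * Complex.I * (j.val : ℂ) * (k.val : ℂ) / (N : ℂ))

/-- The compact spectral map `𝓕 : ℝ^N → ℂ^{N/2}`:
`y_0 = x̂_0/√2 + (x̂_{N/2}/√2)·i` and `y_k = x̂_k` for `k = 1, …, N/2 − 1`. -/
noncomputable def compactMap (N : ℕ) (hN : 0 < N) (x : Fin N → ℝ) : Fin (N / 2) → ℂ :=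
  fun k =>
    if k.val = 0 then
      dft N x ⟨0, hN⟩ / (Real.sqrt 2 : ℂ) +
        dft N x ⟨N / 2, Nat.div_lt_self hN (by norm_num)⟩ / (Real.sqrt 2 : ℂ) * Complex.I
    else
      dft N x ⟨k.val, lt_of_lt_of_le k.isLt (Nat.div_le_self N 2)⟩

/-- The primitive `N`-th root of unity `exp(-2πi/N)` whose powers are the entries of the DFT
matrix (for `N ≠ 0`). -/
noncomputable def dftRoot (N : ℕ) : ℂ := (Complex.exp (2 * Real.pi * Complex.I / N))⁻¹

lemma dftRoot_isPrimitiveRoot {N : ℕ} (hN : 0 < N) : IsPrimitiveRoot (dftRoot N) N :=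
  (Complex.isPrimitiveRoot_exp N hN.ne').inv

lemma conj_dftRoot (N : ℕ) : (starRingEnd ℂ) (dftRoot N) = (dftRoot N)⁻¹ := by
  unfold dftRoot
  rw [map_inv₀, ← Complex.exp_conj, ← Complex.exp_neg]
  simp [neg_div, map_ofNat]

lemma dft_eq_sum_pow (N : ℕ) (x : Fin N → ℝ) (k : Fin N) :
    dft N x k = (1 / (Real.sqrt N : ℂ)) *
      ∑ j : Fin N, (dftRoot N ^ (k : ℕ)) ^ (j : ℕ) * (x j : ℂ) := by
  unfold dft dftRoot
  congr 1
  refine Finset.sum_congr rfl fun j _ => ?_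
  rw [mul_comm, ← Complex.exp_neg, ← Complex.exp_nat_mul, ← Complex.exp_nat_mul]
  congr 2
  ring

lemma eq_zero_of_dft_eq_zero {N : ℕ} (hN : 0 < N) {x : Fin N → ℝ} (h : ∀ k, dft N x k = 0) :
    x = 0 := by
  have hinj : Function.Injective fun k : Fin N => dftRoot N ^ (k : ℕ) := fun a b hab =>
    Fin.ext ((dftRoot_isPrimitiveRoot hN).pow_inj a.isLt b.isLt hab)
  have hsqrt : (1 / (Real.sqrt N : ℂ)) ≠ 0 := by
    have : Real.sqrt N ≠ 0 := by positivity
    exact one_div_ne_zero (by exact_mod_cast this)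
  have hx := Matrix.eq_zero_of_forall_index_sum_pow_mul_eq_zero (v := fun j => (x j : ℂ)) hinj
    fun k => by
      have hk := h k
      rw [dft_eq_sum_pow] at hk
      exact (mul_eq_zero.mp hk).resolve_left hsqrt
  funext j
  simpa using congrFun hx j

/-- Conjugate symmetry of the spectrum of a real signal. Indices are compared through
`N ∣ k + k'`, which also covers the self-conjugate frequencies `0` and `N / 2`. -/
lemma dft_eq_conj {N : ℕ} (x : Fin N → ℝ) {k k' : Fin N} (h : N ∣ (k : ℕ) + k') :
    dft N x k' = (starRingEnd ℂ) (dft N x k) := by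
  have hN : 0 < N := k.pos
  have hpow : dftRoot N ^ (k' : ℕ) = (dftRoot N)⁻¹ ^ (k : ℕ) := by
    rw [inv_pow]
    refine eq_inv_of_mul_eq_one_right ?_
    rw [← pow_add]
    exact (dftRoot_isPrimitiveRoot hN).pow_eq_one_iff_dvd _ |>.mpr h
  rw [dft_eq_sum_pow, dft_eq_sum_pow, hpow]
  simp [conj_dftRoot]

/-- The compact spectral map as an `ℝ`-linear map. -/
noncomputable def compactLinearMap (N : ℕ) (hN : 0 < N) :
    (Fin N → ℝ) →ₗ[ℝ] (Fin (N / 2) → ℂ) where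
  toFun := compactMap N hN
  map_add' x y := by
    funext k
    simp only [compactMap, dft, Pi.add_apply, Complex.ofReal_add, add_mul, Finset.sum_add_distrib]
    split_ifs <;> ring
  map_smul' c x := by
    funext k
    simp only [compactMap, dft, Pi.smul_apply, smul_eq_mul, Complex.ofReal_mul, mul_assoc,
      ← Finset.mul_sum, RingHom.id_apply, Complex.real_smul]
    split_ifs <;> ring

lemma eq_zero_of_compactMap_eq_zero {N : ℕ} (hN : 0 < N) (hEven : Even N) {x : Fin N → ℝ}
    (h : compactMap N hN x = 0) : x = 0 := by
  obtain ⟨m, hm⟩ := hEven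
  have hhalf : N / 2 < N := Nat.div_lt_self hN (by norm_num)
  -- A self-conjugate coefficient is real.
  obtain ⟨a, ha⟩ := Complex.conj_eq_iff_real.mp
    (dft_eq_conj x (k := ⟨0, hN⟩) (k' := ⟨0, hN⟩) (by simp)).symm
  obtain ⟨b, hb⟩ := Complex.conj_eq_iff_real.mp
    (dft_eq_conj x (k := ⟨N / 2, hhalf⟩) (k' := ⟨N / 2, hhalf⟩)
      (by rw [show N / 2 + N / 2 = N by omega])).symm
  have h0 := congrFun h ⟨0, by omega⟩
  simp only [compactMap, if_true, ha, hb, Pi.zero_apply, ← Complex.ofReal_div] at h0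
  have hs : Real.sqrt 2 ≠ 0 := by positivity
  have ha0 : a = 0 := by simpa [hs] using congrArg Complex.re h0
  have hb0 : b = 0 := by simpa [hs] using congrArg Complex.im h0
  have hlow : ∀ (k : ℕ) (hk : k ≤ N / 2), dft N x ⟨k, hk.trans_lt hhalf⟩ = 0 := by
    intro k hk
    rcases Nat.eq_zero_or_pos k with rfl | hpos
    · simp [ha, ha0]
    rcases hk.eq_or_lt with rfl | hlt
    · simp [hb, hb0]
    simpa [compactMap, hpos.ne'] using congrFun h ⟨k, hlt⟩
  refine eq_zero_of_dft_eq_zero hN fun k => ?_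
  rcases le_or_gt (k : ℕ) (N / 2) with hk | hk
  · exact hlow k hk
  · have hle : N - k ≤ N / 2 := by omega
    rw [dft_eq_conj x (k := ⟨N - k, hle.trans_lt hhalf⟩)
      (by rw [Nat.sub_add_cancel k.isLt.le]), hlow _ hle, map_zero]

/-- The compact spectral map `𝓕` is a bijection from `ℝ^N` to `ℂ^{N/2}`. -/
theorem compactMap_bijective (N : ℕ) (hN : 0 < N) (hEven : Even N) :
    Function.Bijective (compactMap N hN) := by
  have hinj : Function.Injective (compactLinearMap N hN) :=
    (injective_iff_map_eq_zero _).mpr fun _ hx => eq_zero_of_compactMap_eq_zero hN hEven hx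
  have hdim : Module.finrank ℝ (Fin N → ℝ) = Module.finrank ℝ (Fin (N / 2) → ℂ) := by
    rw [Module.finrank_pi, Module.finrank_pi_fintype]
    simp [Complex.finrank_real_complex, Nat.div_mul_cancel hEven.two_dvd]
  exact ⟨hinj, (LinearMap.injective_iff_surjective_of_finrank_eq_finrank hdim).mp hinj⟩
end

section
/- Let N be a positive even integer and let 𝓕 : ℝ^N → ℂ^{N/2} be the compact spectral map. Let μ be the probability measure on ℂ^{N/2} under which the real parts and imaginary parts of all N/2 coordinates are independent real Gaussian random variables with mean 0 and variance 1/2 (i.e., each coordinate is a standard complex Gaussian CN(0,1), all coordinates independent). Then the pushforward of μ under the inverse map 𝓕^{−1} : ℂ^{N/2} → ℝ^N is the standard Gaussian measure on ℝ^N, i.e., the product measure whose N real coordinates are independent real Gaussians with mean 0 and variance 1. -/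
/-!
The scaled map `√2 • 𝓕` is a linear isometry from Euclidean `ℝ^N` onto `ℂ^{N/2}`, the latter
regarded as a real Euclidean space of dimension `N`. Indeed the full DFT satisfies Parseval's
identity (`sum_normSq_specCoef`), by orthogonality of characters; as `x` is real,
`x̂_{N-k} = conj x̂_k`, so `x̂_0` and `x̂_{N/2}` are real and every other modulus occurs twice.
Folding the sum in half gives `2 ∑ |y_k|² = ∑ x_j²` (`sum_normSq_compactMap`); a dimension count
makes the isometry surjective (`scaledCompactEquiv`).

On the other side, characteristic functions show that `√2` times a vector of independent `CN(0,1)`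
variables has the standard Gaussian law of the real Euclidean space underlying `ℂ^{N/2}`
(`map_sqrt_two_smul_pi_stdComplexGaussian`). Linear isometric equivalences carry standard Gaussian
measures to standard Gaussian measures, and `𝓕⁻¹` is scaling by `√2` followed by the inverse
isometry (`invFun_compactMap`).
-/


open Complex Finset MeasureTheory ProbabilityTheory

/-- The distribution of a standard complex Gaussian `CN(0,1)`: independent real and imaginary
parts, each real Gaussian with mean `0` and variance `1/2`. -/
noncomputable def stdComplexGaussian : Measure ℂ :=
  Measure.map Complex.measurableEquivRealProd.symm
    ((gaussianReal 0 (1 / 2)).prod (gaussianReal 0 (1 / 2)))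

/-- The spectral coefficients `x̂_k`, indexed by all `k : ℕ` so that periodicity and reflection can
be stated without bounds on `k`; they are powers of the root of unity `exp (-2πi/N)`. -/
noncomputable def specCoef (N : ℕ) (x : Fin N → ℝ) (k : ℕ) : ℂ :=
  (1 / (Real.sqrt N : ℂ)) *
    ∑ j : Fin N, (x j : ℂ) * Complex.exp (-2 * Real.pi * Complex.I / N) ^ (j.val * k)

lemma dft_eq_specCoef (N : ℕ) (x : Fin N → ℝ) (k : Fin N) :
    dft N x k = specCoef N x k.val := by
  unfold dft specCoef
  congr 1
  refine Finset.sum_congr rfl fun j _ => ?_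
  rw [← Complex.exp_nat_mul]
  congr 2
  push_cast
  ring

lemma isPrimitiveRoot_exp_neg (N : ℕ) (hN : 0 < N) :
    IsPrimitiveRoot (Complex.exp (-2 * Real.pi * Complex.I / N)) N := by
  have h := (Complex.isPrimitiveRoot_exp N hN.ne').inv
  rw [← Complex.exp_neg] at h
  rwa [show -2 * (Real.pi : ℂ) * Complex.I / N = -(2 * Real.pi * Complex.I / N) by ring]

lemma conj_exp_neg (N : ℕ) :
    (starRingEnd ℂ) (Complex.exp (-2 * Real.pi * Complex.I / N)) =
      (Complex.exp (-2 * Real.pi * Complex.I / N))⁻¹ := by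
  rw [← Complex.exp_conj, ← Complex.exp_neg]
  congr 1
  simp [neg_div, map_ofNat]

/-- The conjugate symmetry of the spectrum of a real vector. -/
lemma conj_specCoef (N : ℕ) (hN : 0 < N) (x : Fin N → ℝ) {k l : ℕ} (h : k + l = N) :
    (starRingEnd ℂ) (specCoef N x k) = specCoef N x l := by
  have hω := isPrimitiveRoot_exp_neg N hN
  have hc := conj_exp_neg N
  unfold specCoef
  generalize Complex.exp (-2 * Real.pi * Complex.I / N) = ω at hω hc
  simp only [map_mul, map_sum, map_pow, map_div₀, map_one, Complex.conj_ofReal, hc]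
  congr 1
  refine Finset.sum_congr rfl fun j _ => ?_
  congr 1
  rw [inv_pow]
  refine inv_eq_of_mul_eq_one_right ?_
  rw [← pow_add, ← mul_add, h, mul_comm, pow_mul, hω.pow_eq_one, one_pow]

/-- Orthogonality of the characters of `ℤ/N`. -/
lemma sum_root_pow (N : ℕ) {ω : ℂ} (hω : IsPrimitiveRoot ω N) (j l : Fin N) :
    ∑ k ∈ Finset.range N, ω ^ (j.val * k) * (ω⁻¹) ^ (l.val * k) = if j = l then (N : ℂ) else 0 := by
  have hN : N ≠ 0 := fun h => by subst h; exact j.elim0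
  have hω0 : ω ≠ 0 := hω.ne_zero hN
  have hterm : ∀ k, ω ^ (j.val * k) * (ω⁻¹) ^ (l.val * k) = (ω ^ j.val * (ω⁻¹) ^ l.val) ^ k := by
    intro k
    rw [mul_pow, pow_mul, pow_mul]
  simp only [hterm]
  split_ifs with hjl
  · subst hjl
    simp [hω0]
  · have hne : ω ^ j.val * (ω⁻¹) ^ l.val ≠ 1 := by
      intro h
      rw [inv_pow, mul_inv_eq_one₀ (pow_ne_zero _ hω0)] at h
      exact hjl (Fin.ext (hω.pow_inj j.isLt l.isLt h))
    have hpow : (ω ^ j.val * (ω⁻¹) ^ l.val) ^ N = 1 := by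
      rw [mul_pow, ← pow_mul, ← pow_mul, mul_comm j.val, mul_comm l.val, pow_mul, pow_mul,
        inv_pow, hω.pow_eq_one]
      simp
    rw [geom_sum_eq hne, hpow, sub_self, zero_div]

/-- Parseval's identity for the full spectrum. -/
lemma sum_normSq_specCoef (N : ℕ) (hN : 0 < N) (x : Fin N → ℝ) :
    ∑ k ∈ Finset.range N, Complex.normSq (specCoef N x k) = ∑ j, x j ^ 2 := by
  have hω := isPrimitiveRoot_exp_neg N hN
  have hc := conj_exp_neg N
  apply Complex.ofReal_injective
  push_cast
  simp only [← Complex.mul_conj]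
  unfold specCoef
  generalize Complex.exp (-2 * Real.pi * Complex.I / N) = ω at hω hc
  simp only [map_mul, map_sum, map_pow, map_div₀, map_one, Complex.conj_ofReal, hc]
  have hsq : (1 / (Real.sqrt N : ℂ)) * (1 / (Real.sqrt N : ℂ)) = 1 / (N : ℂ) := by
    rw [div_mul_div_comm, ← Complex.ofReal_mul, Real.mul_self_sqrt (Nat.cast_nonneg N)]
    simp
  have hN0 : (N : ℂ) ≠ 0 := by exact_mod_cast hN.ne'
  calc
    _ = ∑ k ∈ Finset.range N, 1 / (N : ℂ) * ∑ j : Fin N, ∑ l : Fin N,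
          (x j : ℂ) * (x l : ℂ) * (ω ^ (j.val * k) * (ω⁻¹) ^ (l.val * k)) := by
        refine Finset.sum_congr rfl fun k _ => ?_
        rw [mul_mul_mul_comm, hsq, Finset.sum_mul_sum]
        congr 1
        refine Finset.sum_congr rfl fun j _ => Finset.sum_congr rfl fun l _ => ?_
        ring
    _ = 1 / (N : ℂ) * ∑ j : Fin N, ∑ l : Fin N, (x j : ℂ) * (x l : ℂ) *
          ∑ k ∈ Finset.range N, (ω ^ (j.val * k) * (ω⁻¹) ^ (l.val * k)) := by
        rw [← Finset.mul_sum, Finset.sum_comm]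
        congr 1
        refine Finset.sum_congr rfl fun j _ => ?_
        rw [Finset.sum_comm]
        refine Finset.sum_congr rfl fun l _ => ?_
        rw [Finset.mul_sum]
    _ = _ := by
        simp only [sum_root_pow N hω, mul_ite, mul_zero, Finset.sum_ite_eq, Finset.mem_univ,
          if_true]
        rw [Finset.mul_sum]
        refine Finset.sum_congr rfl fun j _ => ?_
        field_simp

/-- A sum over a period of a sequence symmetric under `k ↦ 2(p+1) - k`, folded in half. -/
lemma sum_range_fold (p : ℕ) (g : ℕ → ℝ) (hg : ∀ k l, k + l = 2 * (p + 1) → g k = g l) :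
    ∑ k ∈ Finset.range (2 * (p + 1)), g k =
      g 0 + g (p + 1) + 2 * ∑ k ∈ Finset.range p, g (k + 1) := by
  have h : ∑ k ∈ Finset.range p, g (p + 1 + (k + 1)) = ∑ k ∈ Finset.range p, g (k + 1) := by
    rw [← Finset.sum_range_reflect]
    refine Finset.sum_congr rfl fun k hk => hg _ _ ?_
    have := Finset.mem_range.1 hk
    omega
  rw [two_mul, Finset.sum_range_add, Finset.sum_range_succ', Finset.sum_range_succ' _ p, h]
  simp only [add_zero]
  ring

lemma normSq_add_mul_I_of_im_eq_zero {a b : ℂ} (ha : a.im = 0) (hb : b.im = 0) :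
    Complex.normSq (a / (Real.sqrt 2 : ℂ) + b / (Real.sqrt 2 : ℂ) * Complex.I) =
      (Complex.normSq a + Complex.normSq b) / 2 := by
  have h2 : Real.sqrt 2 * Real.sqrt 2 = 2 := Real.mul_self_sqrt (by norm_num)
  simp only [Complex.normSq_apply, Complex.add_re, Complex.add_im, Complex.mul_re, Complex.mul_im,
    Complex.div_ofReal_re, Complex.div_ofReal_im, Complex.I_re, Complex.I_im, ha, hb]
  simp only [zero_div, mul_zero, mul_one, zero_add, add_zero, sub_zero, div_mul_div_comm, h2]
  ring

/-- Parseval's identity for the compact spectral map. -/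
lemma sum_normSq_compactMap (N : ℕ) (hN : 0 < N) (hEven : Even N) (x : Fin N → ℝ) :
    2 * ∑ k, Complex.normSq (compactMap N hN x k) = ∑ j, x j ^ 2 := by
  obtain ⟨p, rfl⟩ : ∃ p, N = 2 * (p + 1) := by
    obtain ⟨r, hr⟩ := hEven
    exact ⟨r - 1, by omega⟩
  have hdiv : 2 * (p + 1) / 2 = p + 1 := by omega
  set X := specCoef (2 * (p + 1)) x with hX
  have hconj : ∀ k l, k + l = 2 * (p + 1) → (starRingEnd ℂ) (X k) = X l :=
    fun k l h => conj_specCoef _ hN x h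
  have h0 : (X 0).im = 0 := by
    have hcast : X 0 = ((1 / Real.sqrt (2 * (p + 1) : ℕ) * ∑ j, x j : ℝ) : ℂ) := by
      simp [hX, specCoef]
    rw [hcast, Complex.ofReal_im]
  have hp : (X (p + 1)).im = 0 := Complex.conj_eq_iff_im.1 (hconj _ _ (by ring))
  rw [← sum_normSq_specCoef _ hN x,
    sum_range_fold p (fun k => Complex.normSq (X k)) fun k l h => by
      simp only [← hconj k l h, Complex.normSq_conj]]
  have hc : ∀ k : Fin (2 * (p + 1) / 2), Complex.normSq (compactMap _ hN x k) =
      if k.val = 0 then (Complex.normSq (X 0) + Complex.normSq (X (p + 1))) / 2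
      else Complex.normSq (X k.val) := by
    intro k
    unfold compactMap
    simp only [dft_eq_specCoef, hdiv, ← hX]
    split_ifs
    · exact normSq_add_mul_I_of_im_eq_zero h0 hp
    · rfl
  simp only [hc]
  rw [Fin.sum_univ_eq_sum_range (fun k => if k = 0 then
    (Complex.normSq (X 0) + Complex.normSq (X (p + 1))) / 2 else Complex.normSq (X k)), hdiv,
    Finset.sum_range_succ']
  simp
  ring

/-- The map `√2 • 𝓕`, linear over `ℝ`, between the Euclidean spaces `ℝ^N` and `ℂ^{N/2}`. -/
noncomputable def scaledCompactLin (N : ℕ) (hN : 0 < N) :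
    EuclideanSpace ℝ (Fin N) →ₗ[ℝ] PiLp 2 (fun _ : Fin (N / 2) => ℂ) where
  toFun x := Real.sqrt 2 • WithLp.toLp 2 (compactMap N hN x.ofLp)
  map_add' x y := by
    rw [← smul_add]
    congr 1
    ext k
    simp only [compactMap, dft, PiLp.add_apply, Complex.ofReal_add, add_mul,
      Finset.sum_add_distrib]
    split_ifs <;> ring
  map_smul' c x := by
    rw [RingHom.id_apply, smul_comm c]
    congr 1
    ext k
    simp only [compactMap, dft, PiLp.smul_apply, smul_eq_mul, Complex.ofReal_mul, mul_assoc,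
      ← Finset.mul_sum, Complex.real_smul]
    split_ifs <;> ring

lemma norm_scaledCompactLin (N : ℕ) (hN : 0 < N) (hEven : Even N)
    (x : EuclideanSpace ℝ (Fin N)) : ‖scaledCompactLin N hN x‖ = ‖x‖ := by
  rw [← sq_eq_sq₀ (norm_nonneg _) (norm_nonneg _), EuclideanSpace.real_norm_sq_eq,
    ← sum_normSq_compactMap N hN hEven]
  change ‖Real.sqrt 2 • WithLp.toLp 2 (compactMap N hN x.ofLp)‖ ^ 2 = _
  rw [norm_smul, mul_pow, PiLp.norm_sq_eq_of_L2]
  simp [Complex.normSq_eq_norm_sq]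

/-- The map `√2 • 𝓕` as a linear isometric equivalence; surjectivity is a dimension count. -/
noncomputable def scaledCompactEquiv (N : ℕ) (hN : 0 < N) (hEven : Even N) :
    EuclideanSpace ℝ (Fin N) ≃ₗᵢ[ℝ] PiLp 2 (fun _ : Fin (N / 2) => ℂ) :=
  LinearIsometry.toLinearIsometryEquiv
    ⟨scaledCompactLin N hN, norm_scaledCompactLin N hN hEven⟩ (by
      rw [finrank_euclideanSpace_fin,
        (WithLp.linearEquiv 2 ℝ (Fin (N / 2) → ℂ)).finrank_eq, Module.finrank_pi_fintype]
      simp [Complex.finrank_real_complex, Nat.div_mul_cancel hEven.two_dvd])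

lemma scaledCompactEquiv_apply (N : ℕ) (hN : 0 < N) (hEven : Even N)
    (x : EuclideanSpace ℝ (Fin N)) :
    scaledCompactEquiv N hN hEven x = Real.sqrt 2 • WithLp.toLp 2 (compactMap N hN x.ofLp) := rfl

lemma invFun_compactMap (N : ℕ) (hN : 0 < N) (hEven : Even N) (y : Fin (N / 2) → ℂ) :
    Function.invFun (compactMap N hN) y =
      ((scaledCompactEquiv N hN hEven).symm (Real.sqrt 2 • WithLp.toLp 2 y)).ofLp := by
  have h2 : Real.sqrt 2 ≠ 0 := by positivity
  have hinj : Function.Injective (compactMap N hN) := by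
    intro a b hab
    have : scaledCompactEquiv N hN hEven (WithLp.toLp 2 a) =
        scaledCompactEquiv N hN hEven (WithLp.toLp 2 b) := by
      simp only [scaledCompactEquiv_apply, hab]
    exact (WithLp.toLp_injective 2) ((scaledCompactEquiv N hN hEven).injective this)
  have hright : compactMap N hN
      ((scaledCompactEquiv N hN hEven).symm (Real.sqrt 2 • WithLp.toLp 2 y)).ofLp = y := by
    have h := (scaledCompactEquiv N hN hEven).apply_symm_apply (Real.sqrt 2 • WithLp.toLp 2 y)
    rw [scaledCompactEquiv_apply] at h
    exact WithLp.toLp_injective 2 (smul_right_injective _ h2 h)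
  conv_lhs => rw [← hright]
  exact Function.leftInverse_invFun hinj _

instance isProbabilityMeasure_stdComplexGaussian : IsProbabilityMeasure stdComplexGaussian :=
  Measure.isProbabilityMeasure_map Complex.measurableEquivRealProd.symm.measurable.aemeasurable

lemma charFun_stdComplexGaussian (t : ℂ) :
    charFun stdComplexGaussian t = Complex.exp (-(‖t‖ ^ 2 : ℝ) / 4) := by
  rw [charFun_apply, stdComplexGaussian, integral_map_equiv]
  have h : ∀ z : ℝ × ℝ,
      Complex.exp ((inner ℝ (Complex.measurableEquivRealProd.symm z) t : ℝ) * Complex.I) =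
        Complex.exp (t.re * z.1 * Complex.I) * Complex.exp (t.im * z.2 * Complex.I) := by
    intro z
    rw [← Complex.exp_add]
    congr 1
    simp [Complex.inner, Complex.measurableEquivRealProd]
    ring
  simp only [h]
  rw [integral_prod_mul (fun a : ℝ => Complex.exp (t.re * a * Complex.I))
    (fun b : ℝ => Complex.exp (t.im * b * Complex.I)), ← charFun_apply_real, ← charFun_apply_real,
    charFun_gaussianReal, charFun_gaussianReal, ← Complex.exp_add, ← Complex.normSq_eq_norm_sq,
    Complex.normSq_apply]
  congr 1
  push_cast
  simp
  ring

/-- After scaling by `√2`, the product of the measures `CN(0,1)` is the standard Gaussian of the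
real Euclidean space underlying `ℂ^n`. -/
lemma map_sqrt_two_smul_pi_stdComplexGaussian (n : ℕ) :
    ((Measure.pi fun _ : Fin n => stdComplexGaussian).map (WithLp.toLp 2)).map
      (fun z => Real.sqrt 2 • z) = stdGaussian (PiLp 2 (fun _ : Fin n => ℂ)) := by
  apply Measure.ext_of_charFun
  ext t
  rw [charFun_map_smul, charFun_pi, charFun_stdGaussian]
  simp only [charFun_stdComplexGaussian]
  rw [← Complex.exp_sum, ← Complex.ofReal_pow, PiLp.norm_sq_eq_of_L2]
  congr 1
  have h2 : (Real.sqrt 2) ^ 2 = 2 := Real.sq_sqrt (by norm_num)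
  simp only [PiLp.smul_apply, norm_smul, mul_pow, Real.norm_eq_abs, sq_abs, h2]
  push_cast
  rw [← Finset.sum_neg_distrib, Finset.sum_div]
  refine Finset.sum_congr rfl fun i _ => ?_
  ring

/-- The pushforward of the i.i.d. standard complex Gaussian measure on `ℂ^{N/2}` under the
inverse compact spectral map `𝓕⁻¹` is the standard Gaussian measure on `ℝ^N`. -/
theorem map_invCompactMap_complexGaussian (N : ℕ) (hN : 0 < N) (hEven : Even N) :
    Measure.map (Function.invFun (compactMap N hN))
        (Measure.pi fun _ : Fin (N / 2) => stdComplexGaussian) =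
      Measure.pi fun _ : Fin N => gaussianReal 0 1 := by
  have hfun : Function.invFun (compactMap N hN) =
      (WithLp.ofLp : EuclideanSpace ℝ (Fin N) → _) ∘ (scaledCompactEquiv N hN hEven).symm ∘
        (fun z => Real.sqrt 2 • z) ∘ WithLp.toLp 2 :=
    funext fun y => invFun_compactMap N hN hEven y
  have hE : Measurable (scaledCompactEquiv N hN hEven).symm :=
    (scaledCompactEquiv N hN hEven).symm.continuous.measurable
  have hs : Measurable (fun z : PiLp 2 (fun _ : Fin (N / 2) => ℂ) => Real.sqrt 2 • z) :=
    (continuous_const_smul _).measurable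
  have ht : Measurable (WithLp.toLp 2 : (Fin (N / 2) → ℂ) → _) := by fun_prop
  have ho : Measurable (WithLp.ofLp : EuclideanSpace ℝ (Fin N) → _) := by fun_prop
  rw [hfun, ← Measure.map_map ho (hE.comp (hs.comp ht)), ← Measure.map_map hE (hs.comp ht),
    ← Measure.map_map hs ht, map_sqrt_two_smul_pi_stdComplexGaussian, stdGaussian_map,
    ← map_pi_eq_stdGaussian, Measure.map_map ho (by fun_prop)]
  exact Measure.map_id
end

section
/- Let B be a positive integer and let a_0, …, a_{B−1} be nonnegative reals, not all zero, with maximum M = max_j a_j. For λ < M define R(λ) = p₁(λ)² / p₂(λ), where p₁(λ) = Σ_j max(a_j − λ, 0) and p₂(λ) = Σ_j max(a_j − λ, 0)² (note p₂(λ) > 0 for λ < M). Then R is nonincreasing on (−∞, M), and lim_{λ → −∞} R(λ) = B. -/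
/-!
For `lam ≤ mu`, put `x_j = max (a_j - lam) 0` and `y_j = max (a_j - mu) 0`, so that
`y_j = max (x_j - (mu - lam)) 0` and the quotient `y_j / x_j` is nondecreasing in `x_j`
(`cross_le`). Thus weighting by `y` favours large entries more than weighting by `x` does, and
the Chebyshev-type inequality `sum_mul_sum_le_of_cross`, used once with the test function `x` and
once with `y`, gives
`(∑ y)² ∑ x² ≤ (∑ x) (∑ y) (∑ x y) ≤ (∑ x)² ∑ y²`, which is the monotonicity.

For `lam < 0` all truncations are inactive, and dividing numerator and denominator by `lam²` turns
the ratio into a rational function of `lam⁻¹`, continuous at `0` with value `B² / B = B`.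
-/

open Finset Filter

/-- Chebyshev's sum inequality in ratio form: if the test function `u` and the likelihood ratio
`y / x` are similarly ordered, then the `x`-weighted mean of `u` is at most its `y`-weighted
mean. The hypothesis is stated without division, so `x` may vanish. -/
lemma sum_mul_sum_le_of_cross {ι : Type*} [Fintype ι] (u x y : ι → ℝ)
    (h : ∀ i j, (u i - u j) * (x i * y j - x j * y i) ≤ 0) :
    (∑ i, u i * x i) * ∑ j, y j ≤ (∑ i, x i) * ∑ j, u j * y j := by
  -- Summing the hypothesis over all `(i, j)` gives twice the difference of the two sides.
  have h0 : ∑ i, ∑ j, (u i - u j) * (x i * y j - x j * y i) ≤ 0 :=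
    Finset.sum_nonpos fun i _ => Finset.sum_nonpos fun j _ => h i j
  have e : ∑ i, ∑ j, (u i - u j) * (x i * y j - x j * y i) =
      ((∑ i, u i * x i) * ∑ j, y j) - ((∑ i, u i * y i) * ∑ j, x j)
        - ((∑ i, x i) * ∑ j, u j * y j) + ((∑ i, y i) * ∑ j, u j * x j) := by
    simp only [Finset.sum_mul_sum, ← Finset.sum_sub_distrib, ← Finset.sum_add_distrib]
    refine Finset.sum_congr rfl fun i _ => Finset.sum_congr rfl fun j _ => ?_
    ring
  rw [e] at h0
  linarith

/-- Raising the threshold shrinks a small entry proportionally more than a large one. -/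
lemma cross_le {s t lam mu : ℝ} (hlm : lam ≤ mu) (hst : s ≤ t) :
    max (t - lam) 0 * max (s - mu) 0 ≤ max (s - lam) 0 * max (t - mu) 0 := by
  rcases le_total (s - mu) 0 with hs | hs
  · rw [max_eq_right hs, mul_zero]
    positivity
  · rw [max_eq_left hs, max_eq_left (by linarith : 0 ≤ t - lam),
      max_eq_left (by linarith : 0 ≤ s - lam), max_eq_left (by linarith : 0 ≤ t - mu)]
    nlinarith [mul_nonneg (sub_nonneg.2 hlm) (sub_nonneg.2 hst)]

/-- The hypothesis of `sum_mul_sum_le_of_cross` for a soft-thresholded test function. -/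
lemma cross_threshold {s t lam mu : ℝ} (nu : ℝ) (hlm : lam ≤ mu) :
    (max (s - nu) 0 - max (t - nu) 0) *
      (max (s - lam) 0 * max (t - mu) 0 - max (t - lam) 0 * max (s - mu) 0) ≤ 0 := by
  rcases le_total s t with h | h
  · refine mul_nonpos_of_nonpos_of_nonneg (sub_nonpos.2 ?_) (sub_nonneg.2 (cross_le hlm h))
    gcongr
  · refine mul_nonpos_of_nonneg_of_nonpos (sub_nonneg.2 ?_) (sub_nonpos.2 (cross_le hlm h))
    gcongr

lemma sum_threshold_sq_pos {ι : Type*} [Fintype ι] (a : ι → ℝ) {lam : ℝ} {j : ι}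
    (hj : lam < a j) : 0 < ∑ i, (max (a i - lam) 0) ^ 2 := by
  refine Finset.sum_pos' (fun i _ => sq_nonneg _) ⟨j, Finset.mem_univ j, ?_⟩
  have : 0 < max (a j - lam) 0 := lt_max_of_lt_left (sub_pos.2 hj)
  positivity

lemma ratio_le_of_le {ι : Type*} [Fintype ι] (a : ι → ℝ) {lam mu : ℝ} (hlm : lam ≤ mu) {j : ι}
    (hj : mu < a j) :
    (∑ i, max (a i - mu) 0) ^ 2 / ∑ i, (max (a i - mu) 0) ^ 2 ≤
      (∑ i, max (a i - lam) 0) ^ 2 / ∑ i, (max (a i - lam) 0) ^ 2 := by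
  rw [div_le_div_iff₀ (sum_threshold_sq_pos a hj) (sum_threshold_sq_pos a (hlm.trans_lt hj))]
  have h1 := sum_mul_sum_le_of_cross (fun i => max (a i - lam) 0) (fun i => max (a i - lam) 0)
    (fun i => max (a i - mu) 0) fun i j => cross_threshold lam hlm
  have h2 := sum_mul_sum_le_of_cross (fun i => max (a i - mu) 0) (fun i => max (a i - lam) 0)
    (fun i => max (a i - mu) 0) fun i j => cross_threshold mu hlm
  have hx : 0 ≤ ∑ i, max (a i - lam) 0 := Finset.sum_nonneg fun i _ => le_max_right _ _
  have hy : 0 ≤ ∑ i, max (a i - mu) 0 := Finset.sum_nonneg fun i _ => le_max_right _ _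
  have hc : ∑ i, max (a i - lam) 0 * max (a i - mu) 0 =
      ∑ i, max (a i - mu) 0 * max (a i - lam) 0 :=
    Finset.sum_congr rfl fun i _ => mul_comm _ _
  simp only [hc, ← pow_two] at h1 h2
  have h3 := mul_le_mul_of_nonneg_right h1 hy
  have h4 := mul_le_mul_of_nonneg_left h2 hx
  linarith

/-- For a negative threshold and nonnegative entries, the ratio in terms of `lam⁻¹`. -/
lemma ratio_eq_of_neg {ι : Type*} [Fintype ι] (a : ι → ℝ) (ha : ∀ i, 0 ≤ a i) {lam : ℝ}
    (hl : lam < 0) :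
    (∑ i, (a i * lam⁻¹ - 1)) ^ 2 / ∑ i, (a i * lam⁻¹ - 1) ^ 2 =
      (∑ i, max (a i - lam) 0) ^ 2 / ∑ i, (max (a i - lam) 0) ^ 2 := by
  have h : ∀ i, max (a i - lam) 0 = lam * (a i * lam⁻¹ - 1) := fun i => by
    rw [max_eq_left (by linarith [ha i])]
    field_simp [hl.ne]
  simp only [h, mul_pow, ← Finset.mul_sum]
  rw [mul_div_mul_left _ _ (pow_ne_zero 2 hl.ne)]

/-- Let `a_0, …, a_{B−1}` be nonnegative reals, not all zero, with maximum `M`. The ratio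
`R(λ) = p₁(λ)²/p₂(λ)` (with `p₁(λ) = Σ_j ReLU(a_j − λ)`, `p₂(λ) = Σ_j ReLU(a_j − λ)²`) is
nonincreasing on `(−∞, M)` and tends to `B` as `λ → −∞`. -/
theorem ratio_antitone_and_limit (B : ℕ) (hB : 0 < B) (a : Fin B → ℝ)
    (ha : ∀ j, 0 ≤ a j) (hne : ∃ j, a j ≠ 0) :
    AntitoneOn
        (fun lam => (∑ j : Fin B, max (a j - lam) 0) ^ 2 /
          ∑ j : Fin B, (max (a j - lam) 0) ^ 2)
        (Set.Iio (Finset.univ.sup' (Finset.univ_nonempty_iff.mpr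
          (Fin.pos_iff_nonempty.mp hB)) a)) ∧
    Tendsto
        (fun lam => (∑ j : Fin B, max (a j - lam) 0) ^ 2 /
          ∑ j : Fin B, (max (a j - lam) 0) ^ 2)
        atBot (nhds (B : ℝ)) := by
  refine ⟨fun lam _ mu hmu hlm => ?_, ?_⟩
  · obtain ⟨j, -, hj⟩ := (Finset.lt_sup'_iff _).1 (Set.mem_Iio.1 hmu)
    exact ratio_le_of_le a hlm hj
  · have hB' : (B : ℝ) ≠ 0 := by positivity
    have hc : ContinuousAt
        (fun t : ℝ => (∑ i, (a i * t - 1)) ^ 2 / ∑ i, (a i * t - 1) ^ 2) 0 :=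
      ContinuousAt.div (by fun_prop) (by fun_prop) (by simpa using hB')
    have hlim := hc.tendsto.comp (tendsto_inv_atBot_zero (𝕜 := ℝ))
    have hval : (∑ i, (a i * 0 - 1)) ^ 2 / ∑ i, (a i * 0 - 1) ^ 2 = (B : ℝ) := by
      simp
      field_simp
    rw [hval] at hlim
    refine hlim.congr' ?_
    filter_upwards [eventually_lt_atBot (0 : ℝ)] with lam hl
    exact ratio_eq_of_neg a ha hl
end
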